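/- Under the observer setup, fix a real γ > 0. There exist an n×n_y real matrix L and an n×n real symmetric positive definite matrix P such that (A + L·C_y)·P + P·(A + L·C_y)ᵀ + (B_w̄ + L·D_w̄)·(B_w̄ + L·D_w̄)ᵀ is negative definite and trace(C_z·P·C_zᵀ) < γ², if and only if there exist an n×n real symmetric positive definite matrix X, an n×n_y real matrix Y, and an n_z×n_z real symmetric positive definite matrix Q such that [[M₁₁, M₁₂, Y], [M₁₂ᵀ, -I_{n_d}, 0], [Yᵀ, 0, -diag(β)]] is negative definite, [[-Q, C_z], [C_zᵀ, -X]] is negative definite, and trace(Q) < γ². Moreover, in this case L = X⁻¹·Y and P = X⁻¹ give a valid correspondence between the two feasibility sets. -/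

import Mathlib

open Matrix

/-- A real symmetric matrix `M` is negative definite if `xᵀ M x < 0` for all `x ≠ 0`. -/
def NegDef {n : Type*} [Fintype n] (M : Matrix n n ℝ) : Prop :=
  M.IsSymm ∧ ∀ x : n → ℝ, x ≠ 0 → x ⬝ᵥ M.mulVec x < 0

/-!
With `X = P⁻¹` and `Y = X * L`, congruence by `X` turns the Lyapunov inequality for `P` into
`X * F + (X * F)ᵀ + X * G * (X * G)ᵀ ≺ 0`, where `F = A + L * Cy` and `G` is the closed-loop input
matrix. Measurement noise scaled by `S` contributes `Y * (S * Sᵀ) * Yᵀ` to the quadratic term, so a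
Schur complement against `diag (1, (S * Sᵀ)⁻¹)` makes the inequality affine in `(X, Y)`. A second
Schur complement reads `Cz * P * Czᵀ ≺ Q`; for any bound `c`, such a `Q` with `Q.trace < c` exists
exactly when `(Cz * P * Czᵀ).trace < c`, because a small multiple of the identity can be added.
-/

section SchurComplement

open scoped ComplexOrder

variable {𝕜 m k : Type*} [RCLike 𝕜] [Finite m]

theorem posDef_fromBlocks₂₂_iff [Fintype k] [DecidableEq k] (A : Matrix m m 𝕜)
    (B : Matrix m k 𝕜) {D : Matrix k k 𝕜} (hD : D.PosDef) :
    (fromBlocks A B Bᴴ D).PosDef ↔ (A - B * D⁻¹ * Bᴴ).PosDef := by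
  classical
  let := Fintype.ofFinite m
  let := hD.isUnit.invertible
  have posSemidef_iff := PosDef.fromBlocks₂₂ A B hD
  have isUnit_iff : IsUnit (fromBlocks A B Bᴴ D) ↔ IsUnit (A - B * D⁻¹ * Bᴴ) := by
    rw [isUnit_fromBlocks_iff_of_invertible₂₂, invOf_eq_nonsing_inv]
  exact ⟨fun h ↦ (posSemidef_iff.1 h.posSemidef).posDef_iff_isUnit.2 (isUnit_iff.1 h.isUnit),
    fun h ↦ (posSemidef_iff.2 h.posSemidef).posDef_iff_isUnit.2 (isUnit_iff.2 h.isUnit)⟩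

theorem posDef_fromBlocks_zero_zero [Finite k] {A : Matrix m m 𝕜} {D : Matrix k k 𝕜}
    (hA : A.PosDef) (hD : D.PosDef) : (fromBlocks A 0 0 D).PosDef := by
  classical
  let := Fintype.ofFinite k
  have schur := posDef_fromBlocks₂₂_iff A 0 hD
  simpa [hA] using schur

end SchurComplement

section NegativeDefinite

variable {m k : Type*} [Fintype m] [Fintype k]

theorem negDef_iff_posDef_neg {M : Matrix m m ℝ} : NegDef M ↔ (-M).PosDef := by
  rw [posDef_iff_dotProduct_mulVec]
  simp [NegDef, IsHermitian, IsSymm, neg_mulVec]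

theorem negDef_fromBlocks₂₂_iff [DecidableEq k] (A : Matrix m m ℝ) (B : Matrix m k ℝ)
    {D : Matrix k k ℝ} (hD : D.PosDef) :
    NegDef (fromBlocks A B Bᵀ (-D)) ↔ NegDef (A + B * D⁻¹ * Bᵀ) := by
  have schur := posDef_fromBlocks₂₂_iff (-A) (-B) hD
  simpa [negDef_iff_posDef_neg, fromBlocks_neg, sub_eq_add_neg, add_comm] using schur

theorem negDef_mul_mul_transpose_iff [DecidableEq m] {U N : Matrix m m ℝ} (hU : IsUnit U) :
    NegDef (U * N * Uᵀ) ↔ NegDef N := by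
  have congruence := IsUnit.posDef_star_right_conjugate_iff (x := -N) hU
  simpa [negDef_iff_posDef_neg, star_eq_conjTranspose] using congruence

theorem negDef_fromBlocks_lyapunov_iff [DecidableEq m] [DecidableEq k] {X : Matrix m m ℝ}
    (hX : X.PosDef) (F : Matrix m m ℝ) (G : Matrix m k ℝ) {W : Matrix k k ℝ} (hW : W.PosDef) :
    NegDef (fromBlocks (X * F + (X * F)ᵀ) (X * G) (X * G)ᵀ (-W)) ↔
      NegDef (F * X⁻¹ + X⁻¹ * Fᵀ + G * W⁻¹ * Gᵀ) := by
  have hXT : Xᵀ = X := hX.isHermitian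
  have hdet : IsUnit X.det := (isUnit_iff_isUnit_det X).1 hX.isUnit
  have congruence : X * F + (X * F)ᵀ + X * G * W⁻¹ * (X * G)ᵀ =
      X * (F * X⁻¹ + X⁻¹ * Fᵀ + G * W⁻¹ * Gᵀ) * Xᵀ := by
    simp only [transpose_mul, hXT, Matrix.mul_add, Matrix.add_mul, Matrix.mul_assoc,
      nonsing_inv_mul _ hdet, mul_nonsing_inv_cancel_left _ _ hdet, Matrix.mul_one]
  rw [negDef_fromBlocks₂₂_iff _ _ hW, congruence, negDef_mul_mul_transpose_iff hX.isUnit]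

theorem exists_posDef_sub_trace_lt_iff {M : Matrix m m ℝ} (hM : M.PosSemidef) {c : ℝ} :
    (∃ Q : Matrix m m ℝ, Q.PosDef ∧ (Q - M).PosDef ∧ Q.trace < c) ↔ M.trace < c := by
  classical
  constructor
  · rintro ⟨Q, -, hQM, hQc⟩
    have : 0 ≤ Q.trace - M.trace := trace_sub Q M ▸ hQM.posSemidef.trace_nonneg
    linarith
  · intro hMc
    obtain ⟨ε, hε, hεc⟩ := exists_pos_mul_lt (sub_pos.2 hMc) (Fintype.card m : ℝ)
    have hεI : (ε • (1 : Matrix m m ℝ)).PosDef := PosDef.one.smul hε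
    refine ⟨M + ε • 1, PosDef.posSemidef_add hM hεI, by rwa [add_sub_cancel_left], ?_⟩
    rw [trace_add, trace_smul, trace_one, smul_eq_mul]
    linarith

theorem exists_negDef_fromBlocks_trace_lt_iff [DecidableEq k] (C : Matrix m k ℝ)
    {X : Matrix k k ℝ} (hX : X.PosDef) {c : ℝ} :
    (∃ Q : Matrix m m ℝ, Q.PosDef ∧ NegDef (fromBlocks (-Q) C Cᵀ (-X)) ∧ Q.trace < c) ↔
      (C * X⁻¹ * Cᵀ).trace < c := by
  have hM : (C * X⁻¹ * Cᵀ).PosSemidef := hX.inv.posSemidef.mul_mul_conjTranspose_same C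
  have schur (Q : Matrix m m ℝ) :
      NegDef (fromBlocks (-Q) C Cᵀ (-X)) ↔ (Q - C * X⁻¹ * Cᵀ).PosDef := by
    rw [negDef_fromBlocks₂₂_iff _ _ hX, negDef_iff_posDef_neg, neg_add, neg_neg, sub_eq_add_neg]
  simp only [schur, exists_posDef_sub_trace_lt_iff hM]

end NegativeDefinite

section BlockGram

variable {R n d y p : Type*} [Fintype d] [Fintype y]

theorem fromCols_add_mul_fromCols_mul_transpose [CommSemiring R] [Fintype p]
    (B : Matrix n d R) (D : Matrix y d R) (S : Matrix y p R) (L : Matrix n y R) :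
    (fromCols B 0 + L * fromCols D S) * (fromCols B 0 + L * fromCols D S)ᵀ =
      (B + L * D) * (B + L * D)ᵀ + L * (S * Sᵀ) * Lᵀ := by
  have add_eq_fromCols : fromCols B 0 + L * fromCols D S = fromCols (B + L * D) (L * S) := by
    rw [mul_fromCols]
    ext i (j | j) <;> simp
  rw [add_eq_fromCols, transpose_fromCols, fromCols_mul_fromRows, transpose_mul]
  simp only [Matrix.mul_assoc]

theorem fromCols_mul_inv_fromBlocks_mul_transpose [CommRing R] [DecidableEq d] [DecidableEq y]
    (G : Matrix n d R) (L : Matrix n y R) {W : Matrix y y R} (hW : IsUnit W) :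
    fromCols G L * (fromBlocks (1 : Matrix d d R) 0 0 W)⁻¹ * (fromCols G L)ᵀ =
      G * Gᵀ + L * W⁻¹ * Lᵀ := by
  rw [inv_fromBlocks_zero₂₁_of_isUnit_iff _ _ _ (by simp [hW]), transpose_fromCols,
    fromCols_mul_fromBlocks, fromCols_mul_fromRows]
  simp

end BlockGram

section DiagonalGram

variable {ι : Type*} [Fintype ι] [DecidableEq ι]

theorem posDef_diagonal_mul_transpose {s : ι → ℝ} (hs : ∀ i, s i ≠ 0) :
    (diagonal s * (diagonal s)ᵀ).PosDef := by
  rw [diagonal_transpose, diagonal_mul_diagonal, posDef_diagonal_iff]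
  exact fun i ↦ mul_self_pos.2 (hs i)

theorem inv_diagonal_mul_transpose {K : Type*} [Field K] {s : ι → K} (hs : ∀ i, s i ≠ 0) :
    (diagonal s * (diagonal s)ᵀ)⁻¹ = diagonal fun i ↦ (s i)⁻¹ ^ 2 := by
  refine inv_eq_left_inv ?_
  rw [diagonal_transpose, diagonal_mul_diagonal, diagonal_mul_diagonal, ← diagonal_one]
  congr 1 with i
  have := hs i
  field_simp

end DiagonalGram

section ObserverDesign

variable {n d y p z : Type*} [Fintype n] [Fintype d] [Fintype y] [Fintype p] [Fintype z]

/-- `P` certifies that `ẋ = F x + G w`, `z = C x` is stable with squared `H₂` norm below `c`: it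
strictly satisfies the Lyapunov inequality of the controllability Gramian, and the resulting trace
bound on the output is below `c`. -/
def IsH2Certificate (F : Matrix n n ℝ) (G : Matrix n p ℝ) (C : Matrix z n ℝ) (c : ℝ)
    (P : Matrix n n ℝ) : Prop :=
  P.PosDef ∧ NegDef (F * P + P * Fᵀ + G * Gᵀ) ∧ (C * P * Cᵀ).trace < c

/-- The block matrix of the observer LMI in the unknowns `X` and `Y = X * L`. Here `B` and `D` are
the scaled disturbance matrices `B_d * S_d` and `D_d * S_d`, and `W` is the precision matrix of the
measurement noise. -/
def observerLMI [DecidableEq d] (A : Matrix n n ℝ) (Cy : Matrix y n ℝ) (B : Matrix n d ℝ)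
    (D : Matrix y d ℝ) (W : Matrix y y ℝ) (X : Matrix n n ℝ) (Y : Matrix n y ℝ) :
    Matrix (n ⊕ (d ⊕ y)) (n ⊕ (d ⊕ y)) ℝ :=
  fromBlocks ((X * A + Y * Cy) + (X * A + Y * Cy)ᵀ) (fromCols (X * B + Y * D) Y)
    (fromRows (X * B + Y * D)ᵀ Yᵀ) (fromBlocks (-1) 0 0 (-W))

/-- `(X, Y, Q)` is a feasible point of the convex observer design problem with bound `c` on the
squared `H₂` norm; `Q` dominates the output Gramian `Cz * X⁻¹ * Czᵀ`. -/
def IsObserverLMISolution [DecidableEq d] (A : Matrix n n ℝ) (Cy : Matrix y n ℝ)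
    (Cz : Matrix z n ℝ) (B : Matrix n d ℝ) (D : Matrix y d ℝ) (W : Matrix y y ℝ) (c : ℝ)
    (X : Matrix n n ℝ) (Y : Matrix n y ℝ) (Q : Matrix z z ℝ) : Prop :=
  X.PosDef ∧ Q.PosDef ∧ NegDef (observerLMI A Cy B D W X Y) ∧
    NegDef (fromBlocks (-Q) Cz Czᵀ (-X)) ∧ Q.trace < c

variable [DecidableEq n] [DecidableEq d] [DecidableEq y]

theorem negDef_observerLMI_iff (A : Matrix n n ℝ) (Cy : Matrix y n ℝ) (B : Matrix n d ℝ)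
    (D : Matrix y d ℝ) {W : Matrix y y ℝ} (hW : W.PosDef) {X : Matrix n n ℝ} (hX : X.PosDef)
    (L : Matrix n y ℝ) :
    NegDef (observerLMI A Cy B D W X (X * L)) ↔
      NegDef ((A + L * Cy) * X⁻¹ + X⁻¹ * (A + L * Cy)ᵀ +
        ((B + L * D) * (B + L * D)ᵀ + L * W⁻¹ * Lᵀ)) := by
  have hW' : (fromBlocks (1 : Matrix d d ℝ) 0 0 W).PosDef :=
    posDef_fromBlocks_zero_zero PosDef.one hW
  have lmi_eq : observerLMI A Cy B D W X (X * L) =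
      fromBlocks (X * (A + L * Cy) + (X * (A + L * Cy))ᵀ) (X * fromCols (B + L * D) L)
        (X * fromCols (B + L * D) L)ᵀ (-fromBlocks 1 0 0 W) := by
    simp only [observerLMI, mul_fromCols, transpose_fromCols, fromBlocks_neg, neg_zero,
      Matrix.mul_add, Matrix.mul_assoc]
  rw [lmi_eq, negDef_fromBlocks_lyapunov_iff hX _ _ hW',
    fromCols_mul_inv_fromBlocks_mul_transpose _ _ hW.isUnit]

theorem exists_isObserverLMISolution_iff (A : Matrix n n ℝ) (Cy : Matrix y n ℝ)
    (Cz : Matrix z n ℝ) (B : Matrix n d ℝ) (D : Matrix y d ℝ) {S : Matrix y p ℝ}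
    (hS : (S * Sᵀ).PosDef) (c : ℝ) (X : Matrix n n ℝ) (Y : Matrix n y ℝ) :
    (∃ Q, IsObserverLMISolution A Cy Cz B D (S * Sᵀ)⁻¹ c X Y Q) ↔
      IsH2Certificate (A + X⁻¹ * Y * Cy) (fromCols B 0 + X⁻¹ * Y * fromCols D S) Cz c X⁻¹ := by
  rw [IsH2Certificate, posDef_inv_iff]
  simp only [IsObserverLMISolution, exists_and_left]
  refine and_congr_right fun hX ↦ ?_
  have hXY : X * (X⁻¹ * Y) = Y :=
    mul_nonsing_inv_cancel_left _ _ ((isUnit_iff_isUnit_det X).1 hX.isUnit)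
  have lmi_iff := negDef_observerLMI_iff A Cy B D hS.inv hX (X⁻¹ * Y)
  rw [hXY, nonsing_inv_nonsing_inv _ ((isUnit_iff_isUnit_det _).1 hS.isUnit),
    ← fromCols_add_mul_fromCols_mul_transpose] at lmi_iff
  rw [← lmi_iff, ← exists_negDef_fromBlocks_trace_lt_iff Cz hX, ← exists_and_left]
  exact exists_congr fun Q ↦ and_left_comm

theorem h2_observer_feasibility_general (A : Matrix n n ℝ) (Cy : Matrix y n ℝ)
    (Cz : Matrix z n ℝ) (B : Matrix n d ℝ) (D : Matrix y d ℝ) {S : Matrix y p ℝ}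
    (hS : (S * Sᵀ).PosDef) (c : ℝ) :
    ((∃ (L : Matrix n y ℝ) (P : Matrix n n ℝ),
        IsH2Certificate (A + L * Cy) (fromCols B 0 + L * fromCols D S) Cz c P) ↔
      ∃ (X : Matrix n n ℝ) (Y : Matrix n y ℝ) (Q : Matrix z z ℝ),
        IsObserverLMISolution A Cy Cz B D (S * Sᵀ)⁻¹ c X Y Q) ∧
    ∀ (X : Matrix n n ℝ) (Y : Matrix n y ℝ) (Q : Matrix z z ℝ),
      IsObserverLMISolution A Cy Cz B D (S * Sᵀ)⁻¹ c X Y Q →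
      IsH2Certificate (A + X⁻¹ * Y * Cy) (fromCols B 0 + X⁻¹ * Y * fromCols D S) Cz c X⁻¹ := by
  have correspondence := exists_isObserverLMISolution_iff A Cy Cz B D hS c
  refine ⟨⟨?_, ?_⟩, fun X Y Q h ↦ (correspondence X Y).1 ⟨Q, h⟩⟩
  · rintro ⟨L, P, hP⟩
    have hdet : IsUnit P.det := (isUnit_iff_isUnit_det P).1 hP.1.isUnit
    refine ⟨P⁻¹, P⁻¹ * L, (correspondence _ _).2 ?_⟩
    rwa [nonsing_inv_nonsing_inv P hdet, mul_nonsing_inv_cancel_left _ _ hdet]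
  · rintro ⟨X, Y, hXY⟩
    exact ⟨X⁻¹ * Y, X⁻¹, (correspondence X Y).1 hXY⟩

end ObserverDesign

/-- Feasibility content of Theorem 1 (sparse `H₂` observer design): existence of an
observer gain `L` and `P ≻ 0` satisfying the `H₂` matrix inequalities is equivalent to
feasibility of the LMI in `(X, Y, Q)`; moreover `L = X⁻¹ Y`, `P = X⁻¹` give a valid
correspondence. -/
theorem h2_observer_feasibility {n nd ny nz : ℕ}
    (A : Matrix (Fin n) (Fin n) ℝ) (Cy : Matrix (Fin ny) (Fin n) ℝ)
    (Cz : Matrix (Fin nz) (Fin n) ℝ) (Bd : Matrix (Fin n) (Fin nd) ℝ)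
    (Dd : Matrix (Fin ny) (Fin nd) ℝ)
    (sd : Fin nd → ℝ) (sn : Fin ny → ℝ) (hsn : ∀ i, 0 < sn i)
    (Sd : Matrix (Fin nd) (Fin nd) ℝ) (Sn : Matrix (Fin ny) (Fin ny) ℝ)
    (hSd : Sd = diagonal sd) (hSn : Sn = diagonal sn)
    (Bw : Matrix (Fin n) (Fin nd ⊕ Fin ny) ℝ) (Dw : Matrix (Fin ny) (Fin nd ⊕ Fin ny) ℝ)
    (hBw : Bw = fromCols (Bd * Sd) 0) (hDw : Dw = fromCols (Dd * Sd) Sn)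
    (β : Fin ny → ℝ) (hβ : ∀ i, β i = ((sn i)⁻¹) ^ 2)
    (γ : ℝ) (hγ : 0 < γ) :
    ((∃ (L : Matrix (Fin n) (Fin ny) ℝ) (P : Matrix (Fin n) (Fin n) ℝ), P.PosDef ∧
        NegDef ((A + L * Cy) * P + P * (A + L * Cy)ᵀ
          + (Bw + L * Dw) * (Bw + L * Dw)ᵀ)
        ∧ (Cz * P * Czᵀ).trace < γ ^ 2) ↔
      (∃ (X : Matrix (Fin n) (Fin n) ℝ) (Y : Matrix (Fin n) (Fin ny) ℝ)
          (Q : Matrix (Fin nz) (Fin nz) ℝ), X.PosDef ∧ Q.PosDef ∧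
        NegDef (fromBlocks ((X * A + Y * Cy) + (X * A + Y * Cy)ᵀ)
          (fromCols (X * Bd * Sd + Y * Dd * Sd) Y)
          (fromRows (X * Bd * Sd + Y * Dd * Sd)ᵀ Yᵀ)
          (fromBlocks (-(1 : Matrix (Fin nd) (Fin nd) ℝ)) 0 0 (-(diagonal β))))
        ∧ NegDef (fromBlocks (-Q) Cz Czᵀ (-X)) ∧ Q.trace < γ ^ 2))
    ∧
    (∀ (X : Matrix (Fin n) (Fin n) ℝ) (Y : Matrix (Fin n) (Fin ny) ℝ)
        (Q : Matrix (Fin nz) (Fin nz) ℝ), X.PosDef → Q.PosDef →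
      NegDef (fromBlocks ((X * A + Y * Cy) + (X * A + Y * Cy)ᵀ)
        (fromCols (X * Bd * Sd + Y * Dd * Sd) Y)
        (fromRows (X * Bd * Sd + Y * Dd * Sd)ᵀ Yᵀ)
        (fromBlocks (-(1 : Matrix (Fin nd) (Fin nd) ℝ)) 0 0 (-(diagonal β)))) →
      NegDef (fromBlocks (-Q) Cz Czᵀ (-X)) → Q.trace < γ ^ 2 →
      ((X⁻¹).PosDef ∧
        NegDef ((A + (X⁻¹ * Y) * Cy) * X⁻¹ + X⁻¹ * (A + (X⁻¹ * Y) * Cy)ᵀ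
          + (Bw + (X⁻¹ * Y) * Dw) * (Bw + (X⁻¹ * Y) * Dw)ᵀ)
        ∧ (Cz * X⁻¹ * Czᵀ).trace < γ ^ 2)) := by
  obtain rfl : β = fun i ↦ (sn i)⁻¹ ^ 2 := funext hβ
  subst hSn hBw hDw
  have hsn_ne (i : Fin ny) : sn i ≠ 0 := (hsn i).ne'
  have general := h2_observer_feasibility_general A Cy Cz (Bd * Sd) (Dd * Sd)
    (posDef_diagonal_mul_transpose hsn_ne) (γ ^ 2)
  simpa only [IsH2Certificate, IsObserverLMISolution, observerLMI,
    inv_diagonal_mul_transpose hsn_ne, ← Matrix.mul_assoc, and_imp] using general
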